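/- Let k ∈ ℕ and let A : 𝓢(ℝ^k) → 𝓢'(ℝ^k) be a continuous linear map with the good mapping property: for each α ∈ {1,…,k} there exists a continuous bilinear map Φ_α : 𝓢(ℝ^k) × 𝓢(ℝ^k) → 𝓢(ℝ²) such that for all f, g ∈ 𝓢(ℝ^k), all φ ∈ 𝓢(ℝ), and all x' ∈ ℝ, (A f)(h_{φ,g,x',α}) = ∫_ℝ Φ_α(f,g)(x,x') φ(x) dx, where h_{φ,g,x',α}(y₁,…,y_k) := φ(y_α)·g(y₁,…,y_{α−1}, x', y_{α+1},…,y_k). Then the bosonic symmetrization Sym_k(A) := (1/k!)·Σ_{π∈S_k} π ∘ A ∘ π⁻¹, restricted to bosonic arguments, also has the good mapping property: for each α ∈ {1,…,k} there exists a continuous bilinear map Φ : 𝓢_s(ℝ^k) × 𝓢_s(ℝ^k) → 𝓢(ℝ²) such that for all bosonic f, g ∈ 𝓢_s(ℝ^k), all φ ∈ 𝓢(ℝ), and all x' ∈ ℝ, (Sym_k(A) f)(h_{φ,g,x',α}) = ∫_ℝ Φ(f,g)(x,x') φ(x) dx. -/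

import Mathlib

/-!
Conjugating by `π` turns the test function `h_{φ,g,x',α}` into `h_{φ,π⁻¹g,x',π⁻¹α}`. Hence
`(π A π⁻¹ f)(h_{φ,g,x',α}) = ∫ Φ_{π⁻¹α}(π⁻¹f,π⁻¹g)(x,x') φ(x) dx`, so each conjugate of `A` inherits
the good mapping property. The operators having it in a fixed coordinate form a linear subspace,
which therefore contains the average over all `π`; its witness on `𝓢(ℝ^k)` restricts to `𝓢_s(ℝ^k)`.
-/

open MeasureTheory SchwartzMap

/-- Distribution-valued operators on `ℝ^n`: continuous linear maps `𝓢(ℝ^n) → 𝓢'(ℝ^n)`. -/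
abbrev DVO (n : ℕ) : Type :=
  SchwartzMap (Fin n → ℝ) ℂ →L[ℂ] (SchwartzMap (Fin n → ℝ) ℂ →L[ℂ] ℂ)

/-- The continuous linear equivalence on `ℝ^k` permuting coordinates: `x ↦ x ∘ π`. -/
noncomputable def permCLE (k : ℕ) (π : Equiv.Perm (Fin k)) : (Fin k → ℝ) ≃L[ℝ] (Fin k → ℝ) :=
  (LinearEquiv.funCongrLeft ℝ ℝ π).toContinuousLinearEquiv

/-- The action of a permutation `π` on Schwartz functions on `ℝ^k`. -/
noncomputable def permCLM (k : ℕ) (π : Equiv.Perm (Fin k)) :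
    SchwartzMap (Fin k → ℝ) ℂ →L[ℂ] SchwartzMap (Fin k → ℝ) ℂ :=
  SchwartzMap.compCLMOfContinuousLinearEquiv ℂ (permCLE k π)

/-- A Schwartz function is bosonic (symmetric) if it is invariant under all permutations of its
arguments. -/
def IsBosonic {k : ℕ} (f : SchwartzMap (Fin k → ℝ) ℂ) : Prop :=
  ∀ (π : Equiv.Perm (Fin k)) (x : Fin k → ℝ), f (x ∘ π) = f x

/-- The bosonic (symmetric) Schwartz space `𝓢_s(ℝ^k)` as a submodule of `𝓢(ℝ^k)` (carrying the
subspace topology). -/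
noncomputable def bosonic (k : ℕ) : Submodule ℂ (SchwartzMap (Fin k → ℝ) ℂ) where
  carrier := {f | IsBosonic f}
  add_mem' := fun hf hg π x => by simp only [SchwartzMap.add_apply, hf π x, hg π x]
  zero_mem' := fun π x => rfl
  smul_mem' := fun c f hf π x => by simp only [SchwartzMap.smul_apply, hf π x]

/-- The bosonic symmetrization `Sym_k(A) = (1/k!)·Σ_{π∈S_k} π ∘ A ∘ π⁻¹`, evaluated at `f`. -/
noncomputable def symDVOApply (k : ℕ) (A : DVO k) (f : SchwartzMap (Fin k → ℝ) ℂ) :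
    SchwartzMap (Fin k → ℝ) ℂ →L[ℂ] ℂ :=
  (Nat.factorial k : ℂ)⁻¹ •
    ∑ π : Equiv.Perm (Fin k), (A (permCLM k π⁻¹ f)).comp (permCLM k π⁻¹)

/-- `Φ` witnesses the good mapping property of `A` in the coordinate `α`:
`(A f)(h_{φ,g,x',α}) = ∫ Φ(f,g)(x,x')·φ(x) dx` for all `f, g, φ, x'`, where
`h_{φ,g,x',α}(y₁,…,y_k) = φ(y_α)·g(y₁,…,y_{α−1},x',y_{α+1},…,y_k)`. -/
def IsGMPWitness (k : ℕ) (A : DVO k) (α : Fin k)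
    (Φ : SchwartzMap (Fin k → ℝ) ℂ × SchwartzMap (Fin k → ℝ) ℂ → SchwartzMap (ℝ × ℝ) ℂ) : Prop :=
  ∀ (f g : SchwartzMap (Fin k → ℝ) ℂ) (φ : SchwartzMap ℝ ℂ) (x' : ℝ)
    (h : SchwartzMap (Fin k → ℝ) ℂ),
    (∀ y : Fin k → ℝ, h y = φ (y α) * g (Function.update y α x')) →
    A f h = ∫ x : ℝ, Φ (f, g) (x, x') * φ x

theorem integrable_slice_mul {D E 𝕜 : Type*} [NormedAddCommGroup D] [NormedSpace ℝ D]
    [MeasurableSpace D] [BorelSpace D] [SecondCountableTopology D] {μ : Measure D}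
    [μ.HasTemperateGrowth] [NormedAddCommGroup E] [NormedSpace ℝ E] [NormedRing 𝕜]
    [NormedSpace ℝ 𝕜] (F : 𝓢(D × E, 𝕜)) (φ : 𝓢(D, 𝕜)) (t : E) :
    Integrable (fun x => F (x, t) * φ x) μ := by
  have slice_continuous : Continuous fun x => F (x, t) := F.continuous.comp (by fun_prop)
  exact φ.integrable.bdd_mul slice_continuous.aestronglyMeasurable
    (Filter.Eventually.of_forall fun x => F.norm_le_seminorm ℝ (x, t))

theorem permCLM_apply (k : ℕ) (π : Equiv.Perm (Fin k)) (f : 𝓢(Fin k → ℝ, ℂ)) (y : Fin k → ℝ) :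
    permCLM k π f y = f (y ∘ π) := rfl

/-- The conjugate `π ∘ A ∘ π⁻¹` of a distribution-valued operator by a permutation. The outer `π`
acts on distributions by `(π·u)(g) = u(π⁻¹·g)`, so it is precomposition with `π⁻¹`. -/
noncomputable def permConj (k : ℕ) (π : Equiv.Perm (Fin k)) (A : DVO k) : DVO k :=
  (ContinuousLinearMap.precomp ℂ (permCLM k π⁻¹)).comp (A.comp (permCLM k π⁻¹))

theorem permConj_apply (k : ℕ) (π : Equiv.Perm (Fin k)) (A : DVO k) (f h : 𝓢(Fin k → ℝ, ℂ)) :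
    permConj k π A f h = A (permCLM k π⁻¹ f) (permCLM k π⁻¹ h) := rfl

/-- The bosonic symmetrization `Sym_k(A)` as a distribution-valued operator; `symDVOApply` gives
only its values. -/
noncomputable def symDVO (k : ℕ) (A : DVO k) : DVO k :=
  (Nat.factorial k : ℂ)⁻¹ • ∑ π : Equiv.Perm (Fin k), permConj k π A

theorem symDVO_apply (k : ℕ) (A : DVO k) (f : 𝓢(Fin k → ℝ, ℂ)) :
    symDVO k A f = symDVOApply k A f := by
  ext h
  simp only [symDVO, symDVOApply, smul_apply, sum_apply, permConj_apply,
    ContinuousLinearMap.comp_apply]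

namespace IsGMPWitness

variable {k : ℕ} {A A' : DVO k} {α : Fin k}
  {Φ Φ' : 𝓢(Fin k → ℝ, ℂ) × 𝓢(Fin k → ℝ, ℂ) → 𝓢(ℝ × ℝ, ℂ)}

theorem zero : IsGMPWitness k 0 α 0 := fun f g φ x' h _ => by simp

theorem add (hΦ : IsGMPWitness k A α Φ) (hΦ' : IsGMPWitness k A' α Φ') :
    IsGMPWitness k (A + A') α (Φ + Φ') := by
  intro f g φ x' h hh
  calc A f h + A' f h
      = (∫ x, Φ (f, g) (x, x') * φ x) + ∫ x, Φ' (f, g) (x, x') * φ x := by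
        rw [hΦ f g φ x' h hh, hΦ' f g φ x' h hh]
    _ = ∫ x, Φ (f, g) (x, x') * φ x + Φ' (f, g) (x, x') * φ x :=
        (integral_add (integrable_slice_mul _ φ x') (integrable_slice_mul _ φ x')).symm
    _ = ∫ x, (Φ + Φ') (f, g) (x, x') * φ x := by
        simp only [Pi.add_apply, add_apply, add_mul]

theorem const_smul (c : ℂ) (hΦ : IsGMPWitness k A α Φ) : IsGMPWitness k (c • A) α (c • Φ) := by
  intro f g φ x' h hh
  calc c * A f h
      = ∫ x, c * (Φ (f, g) (x, x') * φ x) := by rw [hΦ f g φ x' h hh, integral_const_mul]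
    _ = ∫ x, (c • Φ) (f, g) (x, x') * φ x := by
        simp only [Pi.smul_apply, smul_apply, smul_eq_mul, mul_assoc]

theorem permConj (π : Equiv.Perm (Fin k)) (hΦ : IsGMPWitness k A (π⁻¹ α) Φ) :
    IsGMPWitness k (permConj k π A) α
      (fun p => Φ (permCLM k π⁻¹ p.1, permCLM k π⁻¹ p.2)) := by
  intro f g φ x' h hh
  refine hΦ (permCLM k π⁻¹ f) (permCLM k π⁻¹ g) φ x' (permCLM k π⁻¹ h) fun y => ?_
  calc h (y ∘ ⇑π⁻¹)
      = φ (y (π⁻¹ α)) * g (Function.update (y ∘ ⇑π⁻¹) α x') := hh _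
    _ = φ (y (π⁻¹ α)) * permCLM k π⁻¹ g (Function.update y (π⁻¹ α) x') := by
        rw [permCLM_apply, Function.update_comp_eq_of_injective y π⁻¹.injective]

end IsGMPWitness

/-- The operators with the good mapping property in the coordinate `α`. A continuous bilinear
witness is encoded as a curried linear map that is jointly continuous when uncurried. -/
def goodMappingSubmodule (k : ℕ) (α : Fin k) : Submodule ℂ (DVO k) where
  carrier := {A | ∃ B : 𝓢(Fin k → ℝ, ℂ) →ₗ[ℂ] 𝓢(Fin k → ℝ, ℂ) →ₗ[ℂ] 𝓢(ℝ × ℝ, ℂ),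
    Continuous (fun p : 𝓢(Fin k → ℝ, ℂ) × 𝓢(Fin k → ℝ, ℂ) => B p.1 p.2) ∧
      IsGMPWitness k A α (fun p => B p.1 p.2)}
  zero_mem' := ⟨0, continuous_zero, .zero⟩
  add_mem' := fun ⟨B, hB, hA⟩ ⟨B', hB', hA'⟩ => ⟨B + B', hB.add hB', hA.add hA'⟩
  smul_mem' := fun c _ ⟨B, hB, hA⟩ => ⟨c • B, hB.const_smul c, hA.const_smul c⟩

theorem mem_goodMappingSubmodule_iff {k : ℕ} {A : DVO k} {α : Fin k} :
    A ∈ goodMappingSubmodule k α ↔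
      ∃ Φ : 𝓢(Fin k → ℝ, ℂ) × 𝓢(Fin k → ℝ, ℂ) → 𝓢(ℝ × ℝ, ℂ),
        Continuous Φ ∧
        (∀ f f' g, Φ (f + f', g) = Φ (f, g) + Φ (f', g)) ∧
        (∀ (c : ℂ) f g, Φ (c • f, g) = c • Φ (f, g)) ∧
        (∀ f g g', Φ (f, g + g') = Φ (f, g) + Φ (f, g')) ∧
        (∀ (c : ℂ) f g, Φ (f, c • g) = c • Φ (f, g)) ∧
        IsGMPWitness k A α Φ := by
  constructor
  · rintro ⟨B, hB, hA⟩
    exact ⟨fun p => B p.1 p.2, hB, B.map_add₂, B.map_smul₂, fun f => (B f).map_add,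
      fun c f => (B f).map_smul c, hA⟩
  · rintro ⟨Φ, hΦ, add_left, smul_left, add_right, smul_right, hA⟩
    exact ⟨LinearMap.mk₂ ℂ (fun f g => Φ (f, g)) add_left smul_left add_right smul_right, hΦ, hA⟩

theorem permConj_mem_goodMappingSubmodule {k : ℕ} {A : DVO k} {α : Fin k}
    (π : Equiv.Perm (Fin k)) (hA : A ∈ goodMappingSubmodule k (π⁻¹ α)) :
    permConj k π A ∈ goodMappingSubmodule k α := by
  obtain ⟨B, hB, hA⟩ := hA
  let P := permCLM k π⁻¹
  exact ⟨B.compl₁₂ P.toLinearMap P.toLinearMap,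
    hB.comp (P.continuous.prodMap P.continuous), hA.permConj π⟩

theorem sym_preserves_good_mapping_property_general (k : ℕ) (A : DVO k)
    (hA : ∀ α, A ∈ goodMappingSubmodule k α) (α : Fin k) :
    symDVO k A ∈ goodMappingSubmodule k α :=
  Submodule.smul_mem _ _ <| Submodule.sum_mem _ fun π _ =>
    permConj_mem_goodMappingSubmodule π (hA (π⁻¹ α))

/-- If `A : 𝓢(ℝ^k) → 𝓢'(ℝ^k)` has the good mapping property (witnessed, in each coordinate `α`,
by a continuous bilinear `Φ_α : 𝓢(ℝ^k) × 𝓢(ℝ^k) → 𝓢(ℝ²)`), then so does its bosonic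
symmetrization `Sym_k(A)` restricted to bosonic arguments: in each coordinate `α` there is a
continuous bilinear `Ψ : 𝓢_s(ℝ^k) × 𝓢_s(ℝ^k) → 𝓢(ℝ²)` with
`(Sym_k(A) f)(h_{φ,g,x',α}) = ∫ Ψ(f,g)(x,x')·φ(x) dx` for all bosonic `f, g`. -/
theorem sym_preserves_good_mapping_property (k : ℕ) (A : DVO k)
    (hA : ∀ α : Fin k,
      ∃ Φ : SchwartzMap (Fin k → ℝ) ℂ × SchwartzMap (Fin k → ℝ) ℂ → SchwartzMap (ℝ × ℝ) ℂ,
        Continuous Φ ∧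
        (∀ f f' g, Φ (f + f', g) = Φ (f, g) + Φ (f', g)) ∧
        (∀ (c : ℂ) f g, Φ (c • f, g) = c • Φ (f, g)) ∧
        (∀ f g g', Φ (f, g + g') = Φ (f, g) + Φ (f, g')) ∧
        (∀ (c : ℂ) f g, Φ (f, c • g) = c • Φ (f, g)) ∧
        IsGMPWitness k A α Φ) :
    ∀ α : Fin k,
      ∃ Ψ : ↥(bosonic k) × ↥(bosonic k) → SchwartzMap (ℝ × ℝ) ℂ,
        Continuous Ψ ∧
        (∀ f f' g, Ψ (f + f', g) = Ψ (f, g) + Ψ (f', g)) ∧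
        (∀ (c : ℂ) f g, Ψ (c • f, g) = c • Ψ (f, g)) ∧
        (∀ f g g', Ψ (f, g + g') = Ψ (f, g) + Ψ (f, g')) ∧
        (∀ (c : ℂ) f g, Ψ (f, c • g) = c • Ψ (f, g)) ∧
        (∀ (f g : ↥(bosonic k)) (φ : SchwartzMap ℝ ℂ) (x' : ℝ)
          (h : SchwartzMap (Fin k → ℝ) ℂ),
          (∀ y : Fin k → ℝ,
            h y = φ (y α) * (g : SchwartzMap (Fin k → ℝ) ℂ) (Function.update y α x')) →
          symDVOApply k A (f : SchwartzMap (Fin k → ℝ) ℂ) h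
            = ∫ x : ℝ, Ψ (f, g) (x, x') * φ x) := by
  intro α
  obtain ⟨Ψ, hΨ, add_left, smul_left, add_right, smul_right, hSym⟩ :=
    mem_goodMappingSubmodule_iff.mp <| sym_preserves_good_mapping_property_general k A
      (fun β => mem_goodMappingSubmodule_iff.mpr (hA β)) α
  exact ⟨fun p => Ψ (p.1, p.2), hΨ.comp (by fun_prop), fun f f' g => add_left f f' g,
    fun c f g => smul_left c f g, fun f g g' => add_right f g g', fun c f g => smul_right c f g,
    fun f g => symDVO_apply k A f ▸ hSym f g⟩
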